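/- arXiv:2512.17706 — 2 statements merged into one kernel-verified Lean document; each statement's English description precedes it below -/
import Mathlib

section
/- Let C = diag(1,−1), so that D_C is the matrix interval, and let Y ∈ D_C(2) be a Euclidean extreme point of D_C(2) whose imaginary part is nonzero. If (H, Z) is a pair of 2×2 complex Hermitian matrices, not both zero, such that tr(H) = 0 and ker L_C(Y) ⊆ ker Λ_{(I,−C)}(H, Z), then the imaginary part of H is nonzero. -/
open Matrix
open scoped Kronecker ComplexOrder

/-- The matrix `C = diag(1,−1)` defining the matrix interval. -/
noncomputable def Cmat : Matrix (Fin 2) (Fin 2) ℂ := Matrix.diagonal ![1, -1]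

/-!
An extreme point `Y` of `-1 ≤ Y ≤ 1` satisfies `Y ^ 2 = 1`, since `Y ± (1 - Y ^ 2) / 2` both lie in
the interval. Then `1 - Y` kills the columns of `1 + Y` and vice versa, so the kernel containment
gives `(H - Z) (1 + Y) = 0 = (H + Z) (1 - Y)`, whence `Z = H Y`. As `H Y` is Hermitian, `H` commutes
with `Y`. If `H` were real, it would be a nonscalar symmetric `2 × 2` matrix; everything commuting
with such a matrix is symmetric, so the Hermitian matrix `Y` would be real.
-/

section ExtremePoints

variable {𝕜 : Type*} [Field 𝕜] [LinearOrder 𝕜] [IsStrictOrderedRing 𝕜]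

theorem eq_zero_of_add_mem_of_sub_mem_of_mem_extremePoints {E : Type*} [AddCommGroup E]
    [Module 𝕜 E] {s : Set E} {x e : E} (hx : x ∈ s.extremePoints 𝕜) (hadd : x + e ∈ s)
    (hsub : x - e ∈ s) : e = 0 := by
  have hmem : x ∈ openSegment 𝕜 (x + e) (x - e) :=
    ⟨1 / 2, 1 / 2, by norm_num, by norm_num, by norm_num, by module⟩
  simpa using hx.2 hadd hsub hmem

theorem two_nsmul_one_sub_mul_self_nonneg_of_mem_Icc {A : Type*} [Ring A] [StarRing A]
    [PartialOrder A] [StarOrderedRing A] {y : A} (hy : y ∈ Set.Icc (-1) 1) :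
    0 ≤ 2 • (1 - y * y) := by
  have hsub : 0 ≤ 1 - y := sub_nonneg.mpr hy.2
  have hadd : 0 ≤ 1 + y := neg_le_iff_add_nonneg'.mp hy.1
  calc
    0 ≤ (1 - y) * (1 + y) * (1 - y) + (1 + y) * (1 - y) * (1 + y) :=
      add_nonneg (conjugate_nonneg_of_nonneg hadd hsub) (conjugate_nonneg_of_nonneg hsub hadd)
    _ = 2 • (1 - y * y) := by noncomm_ring

theorem mul_self_eq_one_of_mem_extremePoints_Icc {A : Type*} [Ring A] [StarRing A]
    [PartialOrder A] [StarOrderedRing A] [Module 𝕜 A] [PosSMulMono 𝕜 A] {y : A}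
    (hy : y ∈ (Set.Icc (-1 : A) 1).extremePoints 𝕜) : y * y = 1 := by
  have hsub : 0 ≤ 1 - y := sub_nonneg.mpr hy.1.2
  have hadd : 0 ≤ 1 + y := neg_le_iff_add_nonneg'.mp hy.1.1
  set e : A := (1 / 2 : 𝕜) • (1 - y * y) with he
  have he_nonneg : 0 ≤ e := by
    have he_eq : e = (1 / 4 : 𝕜) • 2 • (1 - y * y) := by module
    rw [he_eq]
    exact smul_nonneg (by norm_num) (two_nsmul_one_sub_mul_self_nonneg_of_mem_Icc hy.1)
  have one_sub_add : 1 - (y + e) = (1 / 2 : 𝕜) • ((1 - y) * (1 - y)) := by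
    rw [he, mul_sub, sub_mul, one_mul, mul_one, sub_mul, one_mul]
    module
  have one_add_sub : 1 + (y - e) = (1 / 2 : 𝕜) • ((1 + y) * (1 + y)) := by
    rw [he, mul_add, add_mul, one_mul, mul_one, add_mul, one_mul]
    module
  have hadd_mem : y + e ∈ Set.Icc (-1 : A) 1 := by
    refine ⟨hy.1.1.trans (le_add_of_nonneg_right he_nonneg), sub_nonneg.mp ?_⟩
    rw [one_sub_add]
    exact smul_nonneg (by norm_num) hsub.isSelfAdjoint.mul_self_nonneg
  have hsub_mem : y - e ∈ Set.Icc (-1 : A) 1 := by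
    refine ⟨neg_le_iff_add_nonneg'.mpr ?_, (sub_le_self y he_nonneg).trans hy.1.2⟩
    rw [one_add_sub]
    exact smul_nonneg (by norm_num) hadd.isSelfAdjoint.mul_self_nonneg
  have he_zero : e = 0 :=
    eq_zero_of_add_mem_of_sub_mem_of_mem_extremePoints hy hadd_mem hsub_mem
  exact (sub_eq_zero.mp ((smul_eq_zero_iff_right (by norm_num)).mp he_zero)).symm

end ExtremePoints

section BlockDiagonal

variable {m n R : Type*} [DecidableEq m]

theorem one_kronecker_sub_diagonal_kronecker [Ring R] (d : m → R) (H Z : Matrix n n R) :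
    (1 : Matrix m m R) ⊗ₖ H - diagonal d ⊗ₖ Z =
      (blockDiagonal fun i => H - d i • Z).submatrix Prod.swap Prod.swap := by
  rw [one_kronecker, diagonal_kronecker]
  change _ = (blockDiagonal ((fun _ => H) - fun i => d i • Z)).submatrix _ _
  rw [blockDiagonal_sub]
  rfl

theorem blockDiagonal_mulVec_apply [Fintype m] [Fintype n] [NonUnitalNonAssocSemiring R]
    (M : m → Matrix n n R) (v : n × m → R) (j : n) (i : m) :
    (blockDiagonal M *ᵥ v) (j, i) = (M i *ᵥ fun k => v (k, i)) j := by
  simp [mulVec, dotProduct, Fintype.sum_prod_type, blockDiagonal_apply]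

theorem posSemidef_blockDiagonal_iff [Finite m] [Finite n] [Ring R] [PartialOrder R] [StarRing R]
    [StarOrderedRing R] {M : m → Matrix n n R} :
    (blockDiagonal M).PosSemidef ↔ ∀ i, (M i).PosSemidef := by
  cases nonempty_fintype m
  cases nonempty_fintype n
  refine ⟨fun hM i => ?_, fun hM => .of_dotProduct_mulVec_nonneg ?_ fun v => ?_⟩
  · convert! hM.submatrix fun j => (j, i) using 1
    ext j k
    exact (blockDiagonal_apply_eq M j k i).symm
  · rw [IsHermitian, blockDiagonal_conjTranspose]
    exact congrArg blockDiagonal (funext fun i => (hM i).isHermitian)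
  · simp only [dotProduct, Fintype.sum_prod_type_right, blockDiagonal_mulVec_apply]
    exact Finset.sum_nonneg fun i _ => (hM i).dotProduct_mulVec_nonneg fun k => v (k, i)

theorem posSemidef_one_kronecker_sub_diagonal_kronecker_iff [Finite m] [Finite n] [Ring R]
    [PartialOrder R] [StarRing R] [StarOrderedRing R] {d : m → R} {H Z : Matrix n n R} :
    ((1 : Matrix m m R) ⊗ₖ H - diagonal d ⊗ₖ Z).PosSemidef ↔ ∀ i, (H - d i • Z).PosSemidef := by
  rw [one_kronecker_sub_diagonal_kronecker, ← posSemidef_blockDiagonal_iff]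
  exact posSemidef_submatrix_equiv (Equiv.prodComm m n)

variable [Fintype m] [Fintype n]

theorem one_kronecker_sub_diagonal_kronecker_mulVec_apply [Ring R] (d : m → R)
    (H Z : Matrix n n R) (v : m × n → R) (i : m) (j : n) :
    (((1 : Matrix m m R) ⊗ₖ H - diagonal d ⊗ₖ Z) *ᵥ v) (i, j) =
      ((H - d i • Z) *ᵥ fun k => v (i, k)) j := by
  rw [one_kronecker_sub_diagonal_kronecker]
  exact (congrFun (submatrix_mulVec_equiv _ v Prod.swap (Equiv.prodComm m n)) (i, j)).trans
    (blockDiagonal_mulVec_apply _ _ j i)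

theorem sub_smul_mulVec_eq_zero_of_kronecker_mulVec_eq_zero_imp [Ring R] {d : m → R}
    {H Z H' Z' : Matrix n n R}
    (hker : ∀ v : m × n → R, ((1 : Matrix m m R) ⊗ₖ H - diagonal d ⊗ₖ Z) *ᵥ v = 0 →
      ((1 : Matrix m m R) ⊗ₖ H' - diagonal d ⊗ₖ Z') *ᵥ v = 0)
    (i : m) (w : n → R) (hw : (H - d i • Z) *ᵥ w = 0) : (H' - d i • Z') *ᵥ w = 0 := by
  set v : m × n → R := fun p => (Pi.single i w : m → n → R) p.1 p.2
  have hblock (k : m) : (fun j => v (k, j)) = (Pi.single i w : m → n → R) k := rfl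
  have hv_ker : ((1 : Matrix m m R) ⊗ₖ H - diagonal d ⊗ₖ Z) *ᵥ v = 0 := by
    ext ⟨k, j⟩
    rw [one_kronecker_sub_diagonal_kronecker_mulVec_apply, hblock]
    rcases eq_or_ne k i with rfl | hki
    · rw [Pi.single_eq_same, hw]
      rfl
    · rw [Pi.single_eq_of_ne hki, mulVec_zero]
      rfl
  ext j
  have hij := congrFun (hker v hv_ker) (i, j)
  rwa [one_kronecker_sub_diagonal_kronecker_mulVec_apply, hblock, Pi.single_eq_same] at hij

end BlockDiagonal

section KernelContainment

theorem mul_eq_zero_of_mulVec_eq_zero_imp {l m n p R : Type*} [Fintype m]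
    [NonUnitalNonAssocSemiring R] {M : Matrix l m R} {N : Matrix p m R}
    (hker : ∀ v, M *ᵥ v = 0 → N *ᵥ v = 0) {X : Matrix m n R} (hMX : M * X = 0) : N * X = 0 := by
  ext i j
  have hcol : M *ᵥ (fun k => X k j) = 0 := funext fun l => congr($hMX l j)
  exact congrFun (hker _ hcol) i

theorem eq_mul_of_sub_mul_one_add_eq_zero {A : Type*} [Ring A] [IsAddTorsionFree A] {h y z : A}
    (hsub : (h - z) * (1 + y) = 0) (hadd : (h + z) * (1 - y) = 0) : z = h * y := by
  refine sub_eq_zero.mp (two_nsmul_eq_zero.mp ?_)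
  calc 2 • (z - h * y) = (h + z) * (1 - y) - (h - z) * (1 + y) := by noncomm_ring
    _ = 0 := by rw [hadd, hsub, sub_zero]

end KernelContainment

section Symmetric

theorem isSymm_fin_two_of_commute_of_notMem_range_scalar {R : Type*} [CommRing R] [NoZeroDivisors R]
    {A B : Matrix (Fin 2) (Fin 2) R} (hA : A.IsSymm) (hA_scalar : A ∉ Set.range (scalar (Fin 2)))
    (hAB : Commute A B) : B.IsSymm := by
  have hA10 : A 1 0 = A 0 1 := hA.apply 0 1
  have hentry (i j : Fin 2) : A i 0 * B 0 j + A i 1 * B 1 j = B i 0 * A 0 j + B i 1 * A 1 j := by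
    simpa only [mul_apply, Fin.sum_univ_two] using congr($hAB.eq i j)
  have hoffdiag : A 0 1 * (B 1 0 - B 0 1) = 0 := by
    linear_combination hentry 0 0 + B 0 1 * hA10
  have hdiag : (A 0 0 - A 1 1) * (B 1 0 - B 0 1) = 0 := by
    linear_combination (B 0 0 - B 1 1) * hA10 - hentry 1 0 - hentry 0 1
  suffices B 1 0 = B 0 1 by
    refine IsSymm.ext fun i j => ?_
    fin_cases i <;> fin_cases j <;> simp [this]
  by_contra hB
  have hA01 : A 0 1 = 0 := (mul_eq_zero.mp hoffdiag).resolve_right (sub_ne_zero.mpr hB)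
  have hA00 : A 0 0 = A 1 1 :=
    sub_eq_zero.mp ((mul_eq_zero.mp hdiag).resolve_right (sub_ne_zero.mpr hB))
  refine hA_scalar ⟨A 1 1, ?_⟩
  ext i j
  fin_cases i <;> fin_cases j <;> simp [hA01, hA00, hA10]

theorem eq_zero_of_trace_eq_zero_of_mem_range_scalar {n R : Type*} [Fintype n] [DecidableEq n]
    [Ring R] [NoZeroDivisors R] [CharZero R] {A : Matrix n n R} (htr : A.trace = 0)
    (hA : A ∈ Set.range (scalar n)) : A = 0 := by
  obtain ⟨c, rfl⟩ := hA
  cases isEmpty_or_nonempty n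
  · exact Subsingleton.elim _ _
  · have hc : c = 0 := by simpa using htr
    rw [hc, map_zero]

theorem isSymm_iff_forall_im_eq_zero_of_isHermitian {n : Type*} {M : Matrix n n ℂ}
    (hM : M.IsHermitian) : M.IsSymm ↔ ∀ i j, (M i j).im = 0 := by
  simp only [IsSymm.ext_iff, ← Complex.conj_eq_iff_im]
  refine forall₂_congr fun i j => ?_
  rw [← hM.apply j i]
  rfl

end Symmetric

section MatrixInterval

open scoped MatrixOrder

variable {n : Type*} [DecidableEq n]

variable (n) in
/-- The matrix interval `D_C` at level `n`, with rows and columns indexed by `n`: the convex set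
whose extreme points are studied. Hermitian symmetry is imposed separately from `L_C(W) ≽ 0`. -/
def matrixInterval : Set (Matrix n n ℂ) :=
  {W | W.IsHermitian ∧ ((1 : Matrix (Fin 2 × n) (Fin 2 × n) ℂ) - Cmat ⊗ₖ W).PosSemidef}

theorem matrixInterval_eq_Icc [Finite n] : matrixInterval n = Set.Icc (-1) 1 := by
  cases nonempty_fintype n
  ext W
  have hpsd : ((1 : Matrix (Fin 2 × n) (Fin 2 × n) ℂ) - Cmat ⊗ₖ W).PosSemidef ↔
      W ≤ 1 ∧ -1 ≤ W := by
    rw [← one_kronecker_one, Cmat, posSemidef_one_kronecker_sub_diagonal_kronecker_iff]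
    simp [Fin.forall_fin_two, le_iff, add_comm]
  rw [matrixInterval, Set.mem_ofPred, hpsd, Set.mem_Icc, and_comm (a := -1 ≤ W)]
  exact and_iff_right_of_imp fun hW => (IsSelfAdjoint.iff_of_le hW.1).mpr (.one _)

variable [Fintype n]

theorem mul_self_eq_one_of_mem_extremePoints_matrixInterval {Y : Matrix n n ℂ}
    (hY : Y ∈ (matrixInterval n).extremePoints ℝ) : Y * Y = 1 := by
  rw [matrixInterval_eq_Icc] at hY
  exact mul_self_eq_one_of_mem_extremePoints_Icc hY

theorem eq_mul_of_ker_subset_ker {Y H Z : Matrix n n ℂ} (hY : Y * Y = 1)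
    (hker : ∀ v : Fin 2 × n → ℂ,
      ((1 : Matrix (Fin 2 × n) (Fin 2 × n) ℂ) - Cmat ⊗ₖ Y) *ᵥ v = 0 →
        ((1 : Matrix (Fin 2) (Fin 2) ℂ) ⊗ₖ H - Cmat ⊗ₖ Z) *ᵥ v = 0) : Z = H * Y := by
  rw [← one_kronecker_one, Cmat] at hker
  have hblock := sub_smul_mulVec_eq_zero_of_kronecker_mulVec_eq_zero_imp hker
  have hcomm : Commute 1 Y := .one_left Y
  have hsub : (H - Z) * (1 + Y) = 0 :=
    mul_eq_zero_of_mulVec_eq_zero_imp (M := 1 - Y) (by simpa using hblock 0)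
      (by rw [← hcomm.mul_self_sub_mul_self_eq', one_mul, hY, sub_self])
  have hadd : (H + Z) * (1 - Y) = 0 :=
    mul_eq_zero_of_mulVec_eq_zero_imp (M := 1 + Y) (by simpa [add_comm] using hblock 1)
      (by rw [← hcomm.mul_self_sub_mul_self_eq, one_mul, hY, sub_self])
  have : IsAddTorsionFree (Matrix n n ℂ) := .of_module_rat _
  exact eq_mul_of_sub_mul_one_add_eq_zero hsub hadd

end MatrixInterval

/-- Let `Y ∈ D_C(2)` be a Euclidean extreme point of the matrix interval at level 2 with
nonzero imaginary part.  If `(H, Z)` is a pair of 2×2 Hermitian matrices, not both zero,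
with `tr(H) = 0` and `ker L_C(Y) ⊆ ker Λ_{(I,−C)}(H, Z)`, then `H` has nonzero imaginary
part. -/
theorem stmt_17 (Y : Matrix (Fin 2) (Fin 2) ℂ)
    (hYeuc : Y ∈ Set.extremePoints ℝ
      {W : Matrix (Fin 2) (Fin 2) ℂ | W.IsHermitian ∧
        ((1 : Matrix (Fin 2 × Fin 2) (Fin 2 × Fin 2) ℂ) - Cmat ⊗ₖ W).PosSemidef})
    (hYim : ∃ p q, (Y p q).im ≠ 0)
    (H Z : Matrix (Fin 2) (Fin 2) ℂ)
    (hH : H.IsHermitian) (hZ : Z.IsHermitian)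
    (hne : ¬ (H = 0 ∧ Z = 0)) (htr : H.trace = 0)
    (hker : ∀ v : Fin 2 × Fin 2 → ℂ,
      ((1 : Matrix (Fin 2 × Fin 2) (Fin 2 × Fin 2) ℂ) - Cmat ⊗ₖ Y).mulVec v = 0 →
        ((1 : Matrix (Fin 2) (Fin 2) ℂ) ⊗ₖ H - Cmat ⊗ₖ Z).mulVec v = 0) :
    ∃ p q, (H p q).im ≠ 0 := by
  have hY : Y.IsHermitian := hYeuc.1.1
  have hZ_eq : Z = H * Y :=
    eq_mul_of_ker_subset_ker (mul_self_eq_one_of_mem_extremePoints_matrixInterval hYeuc) hker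
  have hcomm : Commute H Y :=
    (IsSelfAdjoint.commute_iff hH.isSelfAdjoint hY.isSelfAdjoint).mpr (hZ_eq ▸ hZ).isSelfAdjoint
  have hH_ne : H ≠ 0 := fun hH_zero => hne ⟨hH_zero, by rw [hZ_eq, hH_zero, zero_mul]⟩
  by_contra! hH_real
  have hH_symm : H.IsSymm := (isSymm_iff_forall_im_eq_zero_of_isHermitian hH).mpr hH_real
  have hY_symm : Y.IsSymm :=
    isSymm_fin_two_of_commute_of_notMem_range_scalar hH_symm
      (fun hscalar => hH_ne (eq_zero_of_trace_eq_zero_of_mem_range_scalar htr hscalar)) hcomm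
  obtain ⟨p, q, hpq⟩ := hYim
  exact hpq ((isSymm_iff_forall_im_eq_zero_of_isHermitian hY).mp hY_symm p q)
end

section
/- Let D_S be a bounded free simplex in g variables and let X ∈ D_S(2) be a tuple of real symmetric 2×2 matrices that is a Euclidean extreme point of D_S(2) but is not an Arveson extreme point of D_S. Then for every real symmetric 2×2 matrix H there exists a g-tuple W = (W_1,…,W_g) of real symmetric 2×2 matrices such that ker L_S(X) ⊆ ker Λ_{(I,−S)}(H, W). -/
open Matrix
open scoped Kronecker ComplexOrder

/-- Membership in the level of the free spectrahedron determined by the Hermitian tuple `A`,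
at matrix size given by the index type `m`: all coordinates are Hermitian and
`I − Σ_i A_i ⊗ X_i ⪰ 0`. -/
def memD {ι : Type*} [Fintype ι] {d : Type*} [Fintype d] [DecidableEq d]
    {m : Type*} [Fintype m] [DecidableEq m]
    (A : ι → Matrix d d ℂ) (X : ι → Matrix m m ℂ) : Prop :=
  (∀ i, (X i).IsHermitian) ∧
    ((1 : Matrix (d × m) (d × m) ℂ) - ∑ i, A i ⊗ₖ X i).PosSemidef

/-- Boundedness of a free spectrahedron: every level is a bounded set. -/
def BoundedD {ι : Type*} [Fintype ι] {d : Type*} [Fintype d] [DecidableEq d]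
    (A : ι → Matrix d d ℂ) : Prop :=
  ∀ n : ℕ, ∃ C : ℝ, ∀ X : ι → Matrix (Fin n) (Fin n) ℂ,
    memD A X → ∀ i p q, ‖X i p q‖ ≤ C

/-- `Z` is an Arveson extreme point of `D_A`: any dilation of `Z` inside `D_A` is trivial. -/
def IsArvesonExtreme {ι : Type*} [Fintype ι] {d : Type*} [Fintype d] [DecidableEq d]
    {m : Type*} [Fintype m] [DecidableEq m]
    (A : ι → Matrix d d ℂ) (Z : ι → Matrix m m ℂ) : Prop :=
  memD A Z ∧
    ∀ r : ℕ, 1 ≤ r →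
      ∀ (β : ι → Matrix m (Fin r) ℂ) (γ : ι → Matrix (Fin r) (Fin r) ℂ),
        (∀ i, (γ i).IsHermitian) →
        memD A (fun i => Matrix.fromBlocks (Z i) (β i) (β i)ᴴ (γ i)) → β = 0

/-- The real-diagonal defining tuple of a free simplex in `g` variables, determined by the
diagonal entries `σ j : Fin (g+1) → ℝ`. -/
noncomputable def simplexPencil {g : ℕ} (σ : Fin g → Fin (g + 1) → ℝ) :
    Fin g → Matrix (Fin (g + 1)) (Fin (g + 1)) ℂ :=
  fun j => Matrix.diagonal fun p => ((σ j p : ℝ) : ℂ)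

/-! Let `c` be the barycentric coordinates of the origin in a bounded simplex, and let
`P_p = c_p (I - Σ_j s_j(p) X_j)`. Then `X ↦ P` identifies `D_S(n)` affinely with the set of finite
POVMs, i.e. tuples of positive semidefinite `n × n` matrices summing to `I`.

* The nonzero effects of an extreme POVM are linearly independent: a relation `Σ a_p P_p = 0`
  yields the perturbations `(1 ± ε a_p) P_p`.
* If all `P_p` are projections, `X` is Arveson extreme: for an effect `Q` in a dilation,
  `Q - Q² ⪰ 0`, and the corner of `Q - Q²` is `-β βᴴ` when the corner of `Q` is a projection.
* An extreme POVM with at most two nonzero effects `Q, I - Q` consists of projections, because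
  `Q ± (Q - Q²)` and `I - Q ∓ (Q - Q²)` are all positive.

So a real symmetric `2 × 2` extreme `X` which is not Arveson extreme has three nonzero effects; they
form a basis of the real symmetric matrices. Write `H = Σ_p α_p P_p`. The `c`-weighted sum of the
matrices `α_p (I - Σ_j s_j(p) X_j)` is then `H`, so they are the blocks of `Λ(H, W)` for some `W`:
the `p`-th block of `Λ(H, W)` is `α_p` times the `p`-th block of `L_S(X)`. -/

section PencilBlock

variable {ι κ E : Type*} [Fintype ι] [AddCommGroup E] [Module ℝ E]

/-- The `p`-th diagonal block `K - Σ_j s_j(p) Z_j` of `I ⊗ K - Σ_j S_j ⊗ Z_j`, where `S_j` is the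
diagonal matrix with entries `s_j(p)`. The case `K = 1` gives the blocks of `L_S(Z)`. The tuple `Z`
may live in any real vector space, so that real and complex matrices are treated alike. -/
def pencilBlock (s : ι → κ → ℝ) (K : E) (Z : ι → E) (p : κ) : E :=
  K - ∑ j, s j p • Z j

theorem pencilBlock_add_smul {a b : ℝ} (hab : a + b = 1) (s : ι → κ → ℝ) (K : E) (Y Z : ι → E)
    (p : κ) :
    pencilBlock s K (a • Y + b • Z) p = a • pencilBlock s K Y p + b • pencilBlock s K Z p := by
  have hK : K = a • K + b • K := by rw [← add_smul, hab, one_smul]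
  simp only [pencilBlock, Pi.add_apply, Pi.smul_apply, smul_add, Finset.sum_add_distrib, smul_sub,
    Finset.smul_sum, smul_comm (s _ p)]
  nth_rw 1 [hK]
  abel

theorem pencilBlock_mem {V : Submodule ℝ E} {K : E} {Z : ι → E} (hK : K ∈ V) (hZ : ∀ j, Z j ∈ V)
    (s : ι → κ → ℝ) (p : κ) : pencilBlock s K Z p ∈ V :=
  V.sub_mem hK (V.sum_mem fun j _ => V.smul_mem _ (hZ j))

end PencilBlock

section BarycentricDual

variable {ι κ E : Type*} [Fintype ι] [Fintype κ] [DecidableEq ι] [DecidableEq κ]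
  [AddCommGroup E] [Module ℝ E]

/-- Barycentric data for the simplex `{x | ∀ p, Σ_j s_j(p) x_j ≤ 1}`: the barycentric coordinates
`weight` of the origin with respect to the facets, and the tuple `dual` which recovers a point `x`
from its facet values `Σ_j s_j(p) x_j`. Together they are the rows of the inverse of `[1 | s]`. -/
structure BarycentricDual (s : ι → κ → ℝ) where
  weight : κ → ℝ
  dual : ι → κ → ℝ
  weight_pos : ∀ p, 0 < weight p
  sum_weight : ∑ p, weight p = 1
  sum_weight_mul : ∀ j, ∑ p, weight p * s j p = 0
  weight_add_sum_mul_dual : ∀ p q, weight q + ∑ j, s j p * dual j q = if p = q then 1 else 0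
  sum_dual_mul : ∀ i j, ∑ p, dual i p * s j p = if i = j then 1 else 0

theorem nonempty_barycentricDual {g : ℕ} {s : Fin g → Fin (g + 1) → ℝ}
    (hs : ∀ w : Fin g → ℝ, (∀ p, ∑ j, s j p * w j ≤ 0) → w = 0) :
    Nonempty (BarycentricDual s) := by
  let A : Matrix (Fin (g + 1)) (Fin (g + 1)) ℝ := of fun p => Fin.cons 1 fun j => s j p
  have hA : ∀ x p, (A *ᵥ x) p = x 0 + ∑ j, s j p * x j.succ := fun x p => by
    simp [A, mulVec, dotProduct, Fin.sum_univ_succ]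
  have hA_inj : Function.Injective A.mulVecLin := by
    refine (injective_iff_map_eq_zero _).2 fun x hx => ?_
    have hx : ∀ p, x 0 + ∑ j, s j p * x j.succ = 0 := fun p => by
      rw [← hA]; exact congrFun hx p
    have htail : (fun j : Fin g => x j.succ) = 0 := by
      rcases le_total 0 (x 0) with h0 | h0
      · exact hs _ fun p => by linarith [hx p]
      · refine neg_eq_zero.1 (hs _ fun p => ?_)
        simp only [Pi.neg_apply, mul_neg, Finset.sum_neg_distrib]
        linarith [hx p]
    have hsucc : ∀ j : Fin g, x j.succ = 0 := congrFun htail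
    refine funext (Fin.cases ?_ hsucc)
    simpa [hsucc] using hx 0
  have hA_det : IsUnit A.det := (isUnit_iff_isUnit_det A).1 (mulVec_injective_iff_isUnit.1 hA_inj)
  have hright : ∀ p q, A⁻¹ 0 q + ∑ j, s j p * A⁻¹ (Fin.succ j) q = if p = q then 1 else 0 :=
    fun p q => by
      rw [← one_apply, ← mul_nonsing_inv A hA_det]
      exact (hA (fun i => A⁻¹ i q) p).symm
  have hleft : ∀ i j, ∑ p, A⁻¹ i p * A p j = if i = j then 1 else 0 := fun i j => by
    rw [← one_apply, ← nonsing_inv_mul A hA_det, mul_apply]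
  refine ⟨⟨A⁻¹ 0, fun j => A⁻¹ j.succ, fun q => ?_, ?_, fun j => ?_, hright, fun i j => ?_⟩⟩
  · by_contra! hq
    have hdual : -(fun j => A⁻¹ (Fin.succ j) q) = 0 := hs _ fun p => by
      have := hright p q
      simp only [Pi.neg_apply, mul_neg, Finset.sum_neg_distrib]
      split_ifs at this <;> linarith
    have hone := hright q q
    simp only [fun j => congrFun (neg_eq_zero.1 hdual) j, Pi.zero_apply, mul_zero,
      Finset.sum_const_zero, add_zero, if_true] at hone
    linarith
  · simpa [A] using hleft 0 0
  · simpa [A, (Fin.succ_ne_zero j).symm] using hleft 0 j.succ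
  · simpa [A] using hleft i.succ j.succ

namespace BarycentricDual

variable {s : ι → κ → ℝ} (b : BarycentricDual s)

theorem sum_weight_smul_pencilBlock (K : E) (Z : ι → E) :
    ∑ p, b.weight p • pencilBlock s K Z p = K := by
  simp only [pencilBlock, smul_sub, Finset.sum_sub_distrib, ← Finset.sum_smul, b.sum_weight,
    one_smul, Finset.smul_sum, smul_smul]
  rw [Finset.sum_comm]
  simp only [← Finset.sum_smul, b.sum_weight_mul, zero_smul, Finset.sum_const_zero, sub_zero]

include b in
theorem pencilBlock_injective (K : E) : Function.Injective (pencilBlock s K) := by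
  have recover : ∀ Z : ι → E, ∀ i, ∑ p, b.dual i p • ∑ j, s j p • Z j = Z i := fun Z i => by
    simp only [Finset.smul_sum, smul_smul]
    rw [Finset.sum_comm]
    simp only [← Finset.sum_smul, b.sum_dual_mul, ite_smul, one_smul, zero_smul, Finset.sum_ite_eq,
      Finset.mem_univ, if_true]
  intro Y Z hYZ
  funext i
  rw [← recover Y i, ← recover Z i]
  exact Finset.sum_congr rfl fun p _ => congrArg _ (sub_right_injective (congrFun hYZ p))

theorem exists_pencilBlock_eq {V : Submodule ℝ E} {K : E} {B : κ → E} (hB : ∀ p, B p ∈ V)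
    (hK : ∑ p, b.weight p • B p = K) :
    ∃ W : ι → E, (∀ j, W j ∈ V) ∧ pencilBlock s K W = B := by
  refine ⟨fun j => -∑ q, b.dual j q • B q,
    fun j => V.neg_mem (V.sum_mem fun q _ => V.smul_mem _ (hB q)), funext fun p => ?_⟩
  have swap : ∑ j, s j p • ∑ q, b.dual j q • B q = ∑ q, (∑ j, s j p * b.dual j q) • B q := by
    simp only [Finset.smul_sum, smul_smul, Finset.sum_smul]
    exact Finset.sum_comm
  simp only [pencilBlock, smul_neg, Finset.sum_neg_distrib, sub_neg_eq_add, swap, ← hK,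
    ← Finset.sum_add_distrib, ← add_smul, b.weight_add_sum_mul_dual, ite_smul, one_smul, zero_smul,
    Finset.sum_ite_eq, Finset.mem_univ, if_true]

end BarycentricDual

end BarycentricDual

section POVM

variable {κ A : Type*} [Fintype κ] [Ring A] [PartialOrder A]

/-- The set of positive operator-valued measures on the finite outcome set `κ` with values in `A`:
families of positive elements (the effects) with sum `1`. -/
def povm (κ A : Type*) [Fintype κ] [Ring A] [PartialOrder A] : Set (κ → A) :=
  {P | (∀ p, 0 ≤ P p) ∧ ∑ p, P p = 1}

theorem le_one_of_mem_povm [IsOrderedAddMonoid A] {P : κ → A} (hP : P ∈ povm κ A) (p : κ) :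
    P p ≤ 1 :=
  hP.2 ▸ Finset.single_le_sum (fun q _ => hP.1 q) (Finset.mem_univ p)

section Extreme

variable [Module ℝ A] {P : κ → A}

theorem eq_zero_of_mem_extremePoints_povm (hP : P ∈ Set.extremePoints ℝ (povm κ A)) {D : κ → A}
    (hD : ∑ p, D p = 0) (hadd : ∀ p, 0 ≤ P p + D p) (hsub : ∀ p, 0 ≤ P p - D p) : D = 0 := by
  have hadd : P + D ∈ povm κ A := ⟨hadd, by simp [Finset.sum_add_distrib, hP.1.2, hD]⟩
  have hsub : P - D ∈ povm κ A := ⟨hsub, by simp [hP.1.2, hD]⟩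
  refine add_eq_left.1 (hP.2 hadd hsub ⟨1 / 2, 1 / 2, by norm_num, by norm_num, by norm_num, ?_⟩)
  rw [← smul_add, add_add_sub_cancel, ← two_smul ℝ, smul_smul]
  norm_num

theorem smul_eq_zero_of_mem_extremePoints_povm [PosSMulMono ℝ A]
    (hP : P ∈ Set.extremePoints ℝ (povm κ A)) {a : κ → ℝ} (ha : ∑ p, a p • P p = 0) (p : κ) :
    a p • P p = 0 := by
  set ε : ℝ := (1 + ‖a‖)⁻¹
  have hε : 0 < ε := by positivity
  have hεa : ∀ q, |ε * a q| ≤ 1 := fun q => by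
    have : |a q| ≤ ‖a‖ := norm_le_pi_norm a q
    rw [abs_mul, abs_of_pos hε, inv_mul_le_one₀ (by positivity)]
    linarith
  have hD : (fun q => (ε * a q) • P q) = 0 := by
    refine eq_zero_of_mem_extremePoints_povm hP ?_ (fun q => ?_) fun q => ?_
    · simp only [mul_smul, ← Finset.smul_sum, ha, smul_zero]
    · have := smul_nonneg (by linarith [(abs_le.1 (hεa q)).1] : 0 ≤ 1 + ε * a q) (hP.1.1 q)
      rwa [add_smul, one_smul] at this
    · have := smul_nonneg (by linarith [(abs_le.1 (hεa q)).2] : 0 ≤ 1 - ε * a q) (hP.1.1 q)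
      rwa [sub_smul, one_smul] at this
  have := congrFun hD p
  rwa [Pi.zero_apply, mul_smul, smul_eq_zero_iff_right hε.ne'] at this

theorem linearIndepOn_support_of_mem_extremePoints_povm [PosSMulMono ℝ A]
    (hP : P ∈ Set.extremePoints ℝ (povm κ A)) : LinearIndepOn ℝ P (Function.support P) := by
  refine linearIndepOn_iff.2 fun l hl hl0 => Finsupp.ext fun p => ?_
  rw [Finsupp.linearCombination_apply, Finsupp.sum_fintype _ _ (by simp)] at hl0
  by_cases hp : P p = 0
  · exact Finsupp.notMem_support_iff.1 fun h => hl h hp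
  · exact (smul_eq_zero.1 (smul_eq_zero_of_mem_extremePoints_povm hP hl0 p)).resolve_right hp

end Extreme

section StarOrdered

variable [StarRing A] [StarOrderedRing A]

theorem mul_self_le_self_of_mem_Icc {e : A} (he : e ∈ Set.Icc 0 1) : e * e ≤ e := by
  have hcompl : 0 ≤ 1 - e := sub_nonneg.2 he.2
  have h := add_nonneg (conjugate_nonneg_of_nonneg hcompl he.1)
    (conjugate_nonneg_of_nonneg he.1 hcompl)
  rw [← sub_nonneg]
  convert h using 1
  noncomm_ring

variable [Module ℝ A] {P : κ → A}

theorem isIdempotentElem_of_add_eq_one_of_mem_extremePoints_povm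
    (hP : P ∈ Set.extremePoints ℝ (povm κ A)) {p q : κ} (hpq : p ≠ q) (hsum : P p + P q = 1) :
    IsIdempotentElem (P p) := by
  classical
  have hPq : P q = 1 - P p := eq_sub_of_add_eq' hsum
  set E := P p - P p * P p with hEp
  have hEq : E = P q - P q * P q := by rw [hPq, hEp]; noncomm_ring
  have hE : 0 ≤ E :=
    sub_nonneg.2 (mul_self_le_self_of_mem_Icc ⟨hP.1.1 p, le_one_of_mem_povm hP.1 p⟩)
  have hsub_p : 0 ≤ P p - E := by
    rw [hEp, sub_sub_cancel]; exact (IsSelfAdjoint.of_nonneg (hP.1.1 p)).mul_self_nonneg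
  have hsub_q : 0 ≤ P q - E := by
    rw [hEq, sub_sub_cancel]; exact (IsSelfAdjoint.of_nonneg (hP.1.1 q)).mul_self_nonneg
  have hD : (Pi.single p E - Pi.single q E : κ → A) = 0 := by
    refine eq_zero_of_mem_extremePoints_povm hP (by simp) (fun r => ?_) fun r => ?_
    all_goals
      rcases eq_or_ne r p with rfl | hrp
      · simp [hpq, hsub_p, add_nonneg (hP.1.1 _) hE]
      rcases eq_or_ne r q with rfl | hrq
      · simp [hpq.symm, hsub_q, ← sub_eq_add_neg, add_nonneg (hP.1.1 _) hE]
      · simp [hrp, hrq, hP.1.1 r]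
  have hE_zero : E = 0 := by simpa [hpq] using congrFun hD p
  exact (sub_eq_zero.1 hE_zero).symm

theorem two_lt_ncard_support_of_mem_extremePoints_povm
    (hP : P ∈ Set.extremePoints ℝ (povm κ A)) {p : κ} (hp : ¬ IsIdempotentElem (P p)) :
    2 < (Function.support P).ncard := by
  classical
  by_contra! hcard
  have hp_mem : p ∈ Function.support P := fun h => hp (h ▸ IsIdempotentElem.zero)
  have hcard_sdiff : (Function.support P \ {p}).ncard ≤ 1 := by
    rw [Set.ncard_sdiff_singleton_of_mem hp_mem]; omega
  have : Nonempty κ := ⟨p⟩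
  obtain ⟨q, hq⟩ := (Set.ncard_le_one_iff_subset_singleton (Set.toFinite _)).1 hcard_sdiff
  have hzero : ∀ r, r ≠ p ∧ r ≠ q → P r = 0 := fun r ⟨hrp, hrq⟩ =>
    of_not_not fun hr => hrq (hq ⟨hr, hrp⟩)
  rcases eq_or_ne p q with rfl | hpq
  · have hone : P p = 1 := by
      rw [← hP.1.2, Fintype.sum_eq_single p fun r hr => hzero r ⟨hr, hr⟩]
    exact hp (hone ▸ IsIdempotentElem.one)
  · refine hp (isIdempotentElem_of_add_eq_one_of_mem_extremePoints_povm hP hpq ?_)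
    rw [← hP.1.2, Fintype.sum_eq_add p q hpq hzero]

end StarOrdered

end POVM

section RealSymmetric

/-- The real symmetric `n × n` matrices, as a real subspace of the complex matrices. -/
noncomputable def realSymmetric (n : Type*) : Submodule ℝ (Matrix n n ℂ) :=
  (selfAdjoint.submodule ℝ (Matrix n n ℝ)).map Complex.ofRealAm.toLinearMap.mapMatrix

variable {n : Type*}

theorem mem_realSymmetric_iff {A : Matrix n n ℂ} :
    A ∈ realSymmetric n ↔ ∃ R : Matrix n n ℝ, R.IsSymm ∧ R.map Complex.ofReal = A :=
  Iff.rfl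

theorem mem_realSymmetric_of_im_eq_zero {A : Matrix n n ℂ} (hA : A.IsHermitian)
    (him : ∀ i j, (A i j).im = 0) : A ∈ realSymmetric n := by
  refine mem_realSymmetric_iff.2 ⟨A.map Complex.re, ?_, ?_⟩
  · ext i j
    simpa using congrArg Complex.re (hA.apply i j)
  · ext i j
    exact Complex.ext (by simp) (by simp [him])

theorem one_mem_realSymmetric [DecidableEq n] : 1 ∈ realSymmetric n :=
  ⟨1, isSymm_one, by simp⟩

theorem finrank_realSymmetric_le [Fintype n] :
    Module.finrank ℝ (realSymmetric n) ≤ (Fintype.card n + 1).choose 2 := by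
  let f : (Sym2 n → ℝ) →ₗ[ℝ] Matrix n n ℝ :=
    { toFun := fun x => of fun i j => x s(i, j)
      map_add' := fun _ _ => rfl
      map_smul' := fun _ _ => rfl }
  have hf : selfAdjoint.submodule ℝ (Matrix n n ℝ) ≤ LinearMap.range f := fun R hR =>
    ⟨Sym2.lift ⟨R, fun i j => congrFun (congrFun hR j) i⟩, rfl⟩
  calc Module.finrank ℝ (realSymmetric n)
      ≤ Module.finrank ℝ (selfAdjoint.submodule ℝ (Matrix n n ℝ)) := Submodule.finrank_map_le _ _
    _ ≤ Module.finrank ℝ (LinearMap.range f) := Submodule.finrank_mono hf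
    _ ≤ Module.finrank ℝ (Sym2 n → ℝ) := LinearMap.finrank_range_le f
    _ = (Fintype.card n + 1).choose 2 := by classical rw [Module.finrank_pi, Sym2.card]

end RealSymmetric

theorem span_range_eq_of_finrank_le_ncard {K E κ : Type*} [DivisionRing K] [AddCommGroup E]
    [Module K E] [Finite κ] {V : Submodule K E} [FiniteDimensional K V] {v : κ → E} {t : Set κ}
    (hv : LinearIndepOn K v t) (hV : ∀ p, v p ∈ V) (ht : Module.finrank K V ≤ t.ncard) :
    Submodule.span K (Set.range v) = V := by
  have := Fintype.ofFinite t
  have := FiniteDimensional.span_of_finite K (Set.finite_range v)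
  refine Submodule.eq_of_le_of_finrank_le (Submodule.span_le.2 (Set.range_subset_iff.2 hV)) ?_
  calc Module.finrank K V ≤ Fintype.card t := by rwa [← Nat.card_eq_fintype_card]
    _ = Module.finrank K (Submodule.span K (Set.range fun p : t => v p)) :=
      (finrank_span_eq_card hv).symm
    _ ≤ Module.finrank K (Submodule.span K (Set.range v)) :=
      Submodule.finrank_mono (Submodule.span_mono (Set.range_comp_subset_range _ v))

section BlockMatrices

variable {m n κ 𝕜 : Type*} [RCLike 𝕜]

theorem blockDiagonal_mulVec [Fintype m] [Fintype κ] [DecidableEq κ] (M : κ → Matrix m m 𝕜)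
    (v : m × κ → 𝕜) (i : m) (p : κ) :
    (blockDiagonal M *ᵥ v) (i, p) = (M p *ᵥ fun j => v (j, p)) i := by
  simp [mulVec, dotProduct, Fintype.sum_prod_type, blockDiagonal_apply, ite_mul]

open scoped MatrixOrder in
theorem posSemidef_blockDiagonal_iff_s18 [Finite m] [Finite κ] [DecidableEq κ]
    {M : κ → Matrix m m 𝕜} :
    (blockDiagonal M).PosSemidef ↔ ∀ p, (M p).PosSemidef := by
  refine ⟨fun h p => ?_, fun h => ?_⟩
  · convert h.submatrix fun i : m => (i, p)
    ext i j
    simp [blockDiagonal_apply]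
  · classical
    have := Fintype.ofFinite m
    have := Fintype.ofFinite κ
    choose B hB using fun p => CStarAlgebra.nonneg_iff_eq_star_mul_self.1 (h p).nonneg
    have hM : blockDiagonal M = (blockDiagonal B)ᴴ * blockDiagonal B := by
      rw [blockDiagonal_conjTranspose, ← blockDiagonal_mul]
      exact congrArg _ (funext hB)
    exact hM ▸ posSemidef_conjTranspose_mul_self _

open scoped MatrixOrder in
theorem toBlocks₁₂_eq_zero_of_isIdempotentElem_toBlocks₁₁ [Fintype m] [Finite n]
    [DecidableEq m] [DecidableEq n]
    {Q : Matrix (m ⊕ n) (m ⊕ n) 𝕜} (hQ : Q ∈ Set.Icc 0 1) (hidem : IsIdempotentElem Q.toBlocks₁₁) :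
    Q.toBlocks₁₂ = 0 := by
  have := Fintype.ofFinite n
  have hQ₂₁ : Q.toBlocks₂₁ = Q.toBlocks₁₂ᴴ := by
    ext i j
    exact (congrFun (congrFun hQ.1.star_eq (Sum.inr i)) (Sum.inl j)).symm
  have hcorner : (Q - Q * Q).toBlocks₁₁ = -(Q.toBlocks₁₂ * Q.toBlocks₁₂ᴴ) := by
    have hmul : (Q * Q).toBlocks₁₁ = Q.toBlocks₁₁ + Q.toBlocks₁₂ * Q.toBlocks₁₂ᴴ := by
      rw [← hQ₂₁]
      nth_rw 1 [← hidem.eq]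
      ext i j
      simp [toBlocks₁₁, toBlocks₁₂, toBlocks₂₁, mul_apply, Fintype.sum_sum_type]
    change Q.toBlocks₁₁ - (Q * Q).toBlocks₁₁ = _
    rw [hmul, sub_add_cancel_left]
  have hnonpos : Q.toBlocks₁₂ * Q.toBlocks₁₂ᴴ ≤ 0 := by
    rw [← neg_nonneg, ← hcorner, nonneg_iff_posSemidef]
    exact (sub_nonneg.2 (mul_self_le_self_of_mem_Icc hQ)).posSemidef.submatrix Sum.inl
  exact self_mul_conjTranspose_eq_zero.1
    (hnonpos.antisymm (posSemidef_self_mul_conjTranspose _).nonneg)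

end BlockMatrices

section FreeSimplex

variable {g : ℕ} {s : Fin g → Fin (g + 1) → ℝ} {m : Type*}

theorem one_kronecker_sub_sum_kronecker_eq (s : Fin g → Fin (g + 1) → ℝ) (K : Matrix m m ℂ)
    (Z : Fin g → Matrix m m ℂ) :
    (1 : Matrix (Fin (g + 1)) (Fin (g + 1)) ℂ) ⊗ₖ K - ∑ j, simplexPencil s j ⊗ₖ Z j =
      (blockDiagonal (pencilBlock s K Z)).submatrix Prod.swap Prod.swap := by
  ext ⟨p, i⟩ ⟨q, k⟩
  by_cases hpq : p = q
  · simp [hpq, simplexPencil, pencilBlock, blockDiagonal_apply, Matrix.sum_apply]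
  · simp [hpq, simplexPencil, blockDiagonal_apply, Matrix.sum_apply]

theorem one_kronecker_sub_sum_kronecker_mulVec_eq_zero_iff [Fintype m] {K : Matrix m m ℂ}
    {Z : Fin g → Matrix m m ℂ} {v : Fin (g + 1) × m → ℂ} :
    ((1 : Matrix (Fin (g + 1)) (Fin (g + 1)) ℂ) ⊗ₖ K - ∑ j, simplexPencil s j ⊗ₖ Z j) *ᵥ v = 0 ↔
      ∀ p, pencilBlock s K Z p *ᵥ (fun i => v (p, i)) = 0 := by
  have hblock : ∀ p i, (((1 : Matrix (Fin (g + 1)) (Fin (g + 1)) ℂ) ⊗ₖ K -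
      ∑ j, simplexPencil s j ⊗ₖ Z j) *ᵥ v) (p, i) =
        (pencilBlock s K Z p *ᵥ fun i => v (p, i)) i := fun p i => by
    rw [one_kronecker_sub_sum_kronecker_eq]
    exact (congrFun (submatrix_mulVec_equiv _ v Prod.swap (Equiv.prodComm _ _)) (p, i)).trans
      (blockDiagonal_mulVec _ _ _ _)
  simp only [funext_iff, Prod.forall, hblock, Pi.zero_apply]

variable [DecidableEq m]

namespace BarycentricDual

variable (b : BarycentricDual s)

/-- The weighted block `c_p (I - Σ_j s_j(p) X_j)`, the effect of the outcome `p` in the POVM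
attached to the point `X` of the free simplex. -/
noncomputable def effect (X : Fin g → Matrix m m ℂ) (p : Fin (g + 1)) : Matrix m m ℂ :=
  b.weight p • pencilBlock s 1 X p

theorem sum_effect (X : Fin g → Matrix m m ℂ) : ∑ p, b.effect X p = 1 :=
  b.sum_weight_smul_pencilBlock 1 X

theorem effect_injective : Function.Injective (b.effect (m := m)) := fun _ _ h =>
  b.pencilBlock_injective 1 <| funext fun p =>
    smul_right_injective _ (b.weight_pos p).ne' (congrFun h p)

theorem effect_add_smul {x y : ℝ} (hxy : x + y = 1) (Y Z : Fin g → Matrix m m ℂ) :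
    b.effect (x • Y + y • Z) = x • b.effect Y + y • b.effect Z := by
  funext p
  simp only [effect, pencilBlock_add_smul hxy, Pi.add_apply, Pi.smul_apply, smul_add,
    smul_comm (b.weight p)]

theorem exists_effect_eq {V : Submodule ℝ (Matrix m m ℂ)} {P : Fin (g + 1) → Matrix m m ℂ}
    (hV : ∀ p, P p ∈ V) (hP : ∑ p, P p = 1) :
    ∃ X : Fin g → Matrix m m ℂ, (∀ j, X j ∈ V) ∧ b.effect X = P := by
  have hw : ∀ p, b.weight p • (b.weight p)⁻¹ • P p = P p := fun p =>
    smul_inv_smul₀ (b.weight_pos p).ne' (P p)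
  obtain ⟨X, hXV, hX⟩ := b.exists_pencilBlock_eq (K := 1) (B := fun p => (b.weight p)⁻¹ • P p)
    (fun p => V.smul_mem _ (hV p)) (by simp only [hw, hP])
  exact ⟨X, hXV, funext fun p => by rw [effect, hX, hw]⟩

end BarycentricDual

variable [Fintype m]

open scoped MatrixOrder in
theorem memD_simplexPencil_iff {X : Fin g → Matrix m m ℂ} :
    memD (simplexPencil s) X ↔ (∀ j, (X j).IsHermitian) ∧ ∀ p, 0 ≤ pencilBlock s 1 X p := by
  simp only [nonneg_iff_posSemidef, ← posSemidef_blockDiagonal_iff_s18]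
  rw [memD, ← one_kronecker_one, one_kronecker_sub_sum_kronecker_eq]
  exact and_congr_right' (posSemidef_submatrix_equiv (Equiv.prodComm _ _))

theorem eq_zero_of_boundedD (hbdd : BoundedD (simplexPencil s)) {w : Fin g → ℝ}
    (hw : ∀ p, ∑ j, s j p * w j ≤ 0) : w = 0 := by
  obtain ⟨C, hC⟩ := hbdd 1
  have hray : ∀ N : ℕ, memD (simplexPencil s)
      fun j => (N * w j) • (1 : Matrix (Fin 1) (Fin 1) ℂ) := fun N => by
    refine memD_simplexPencil_iff.2 ⟨fun j => ?_, fun p => ?_⟩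
    · exact isHermitian_one.smul (IsSelfAdjoint.all (N * w j))
    · have hblock : pencilBlock s (1 : Matrix (Fin 1) (Fin 1) ℂ) (fun j => (N * w j) • 1) p =
          (1 - N * ∑ j, s j p * w j) • 1 := by
        simp only [pencilBlock, smul_smul, ← Finset.sum_smul, sub_smul, one_smul, Finset.mul_sum,
          mul_left_comm]
      rw [hblock]
      have : N * ∑ j, s j p * w j ≤ 0 := mul_nonpos_of_nonneg_of_nonpos N.cast_nonneg (hw p)
      exact (PosSemidef.one.smul (by linarith)).nonneg
  funext j
  by_contra hj
  obtain ⟨N, hN⟩ := exists_lt_nsmul (abs_pos.2 hj) C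
  have hnorm : N * |w j| ≤ C := by simpa using hC _ (hray N) j 0 0
  exact hN.not_ge (by rwa [nsmul_eq_mul])

namespace BarycentricDual

variable (b : BarycentricDual s)

open scoped MatrixOrder

theorem memD_iff_effect_mem_povm {X : Fin g → Matrix m m ℂ} :
    memD (simplexPencil s) X ↔ b.effect X ∈ povm (Fin (g + 1)) (Matrix m m ℂ) := by
  have hnonneg : (∀ p, 0 ≤ b.effect X p) ↔ ∀ p, 0 ≤ pencilBlock s 1 X p :=
    forall_congr' fun p => smul_nonneg_iff_nonneg_of_pos_left (b.weight_pos p)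
  refine memD_simplexPencil_iff.trans
    ⟨fun h => ⟨hnonneg.2 h.2, b.sum_effect X⟩, fun h => ⟨?_, hnonneg.1 h.1⟩⟩
  obtain ⟨Y, hY, hYX⟩ := b.exists_effect_eq (V := selfAdjoint.submodule ℝ (Matrix m m ℂ))
    (fun p => IsSelfAdjoint.of_nonneg (h.1 p)) h.2
  exact b.effect_injective hYX ▸ hY

theorem effect_mem_extremePoints {X : Fin g → Matrix m m ℂ}
    (hX : X ∈ Set.extremePoints ℝ {W | memD (simplexPencil s) W}) :
    b.effect X ∈ Set.extremePoints ℝ (povm (Fin (g + 1)) (Matrix m m ℂ)) := by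
  have surj : ∀ P ∈ povm (Fin (g + 1)) (Matrix m m ℂ),
      ∃ Y, memD (simplexPencil s) Y ∧ b.effect Y = P := fun P hP => by
    obtain ⟨Y, -, rfl⟩ := b.exists_effect_eq (V := ⊤) (fun _ => trivial) hP.2
    exact ⟨Y, b.memD_iff_effect_mem_povm.2 hP, rfl⟩
  refine ⟨b.memD_iff_effect_mem_povm.1 hX.1, fun P hP Q hQ ⟨x, y, hx, hy, hxy, hPQ⟩ => ?_⟩
  obtain ⟨Y, hY, rfl⟩ := surj P hP
  obtain ⟨Z, hZ, rfl⟩ := surj Q hQ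
  rw [← b.effect_add_smul hxy] at hPQ
  rw [hX.2 hY hZ ⟨x, y, hx, hy, hxy, b.effect_injective hPQ⟩]

theorem isArvesonExtreme_of_isIdempotentElem_effect {X : Fin g → Matrix m m ℂ}
    (hX : memD (simplexPencil s) X) (hidem : ∀ p, IsIdempotentElem (b.effect X p)) :
    IsArvesonExtreme (simplexPencil s) X := by
  refine ⟨hX, fun r _ β γ _ hZ => ?_⟩
  set Z := fun j => fromBlocks (X j) (β j) (β j)ᴴ (γ j)
  have hpovm := b.memD_iff_effect_mem_povm.1 hZ
  have h₁₁ : ∀ p, (b.effect Z p).toBlocks₁₁ = b.effect X p := fun p => by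
    ext i j
    simp [effect, pencilBlock, toBlocks₁₁, Z, Matrix.sum_apply, one_apply]
  have h₁₂ : ∀ p, (b.effect Z p).toBlocks₁₂ = b.weight p • pencilBlock s 0 β p := fun p => by
    ext i j
    simp [effect, pencilBlock, toBlocks₁₂, Z, Matrix.sum_apply]
  have hβ : ∀ p, pencilBlock s 0 β p = 0 := fun p => by
    have hcorner := toBlocks₁₂_eq_zero_of_isIdempotentElem_toBlocks₁₁
      ⟨hpovm.1 p, le_one_of_mem_povm hpovm p⟩ ((h₁₁ p).symm ▸ hidem p)
    rw [h₁₂] at hcorner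
    exact (smul_eq_zero.1 hcorner).resolve_left (b.weight_pos p).ne'
  refine b.pencilBlock_injective 0 (funext fun p => (hβ p).trans ?_)
  simp [pencilBlock]

theorem span_range_effect_eq_realSymmetric {X : Fin g → Matrix (Fin 2) (Fin 2) ℂ}
    (hXsymm : ∀ j, X j ∈ realSymmetric (Fin 2))
    (hXeuc : X ∈ Set.extremePoints ℝ {W | memD (simplexPencil s) W})
    (hXarv : ¬ IsArvesonExtreme (simplexPencil s) X) :
    Submodule.span ℝ (Set.range (b.effect X)) = realSymmetric (Fin 2) := by
  have hP := b.effect_mem_extremePoints hXeuc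
  obtain ⟨p, hp⟩ : ∃ p, ¬ IsIdempotentElem (b.effect X p) := by
    by_contra! h
    exact hXarv (b.isArvesonExtreme_of_isIdempotentElem_effect hXeuc.1 h)
  exact span_range_eq_of_finrank_le_ncard (linearIndepOn_support_of_mem_extremePoints_povm hP)
    (fun q => Submodule.smul_mem _ _ (pencilBlock_mem one_mem_realSymmetric hXsymm s q))
    (finrank_realSymmetric_le.trans (two_lt_ncard_support_of_mem_extremePoints_povm hP hp))

end BarycentricDual

end FreeSimplex

/-- Let `D_S` be a bounded free simplex and `X ∈ D_S(2)` a tuple of real symmetric 2×2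
matrices that is a Euclidean extreme point of `D_S(2)` but not an Arveson extreme point of
`D_S`.  Then for every real symmetric 2×2 matrix `H` there is a `g`-tuple `W` of real
symmetric 2×2 matrices with `ker L_S(X) ⊆ ker Λ_{(I,−S)}(H, W)`. -/
theorem stmt_18 {g : ℕ} (s : Fin g → Fin (g + 1) → ℝ)
    (hbdd : BoundedD (simplexPencil s))
    (X : Fin g → Matrix (Fin 2) (Fin 2) ℂ)
    (hXreal : ∀ j p q, (X j p q).im = 0)
    (hXeuc : X ∈ Set.extremePoints ℝ
      {W : Fin g → Matrix (Fin 2) (Fin 2) ℂ | memD (simplexPencil s) W})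
    (hXnotarv : ¬ IsArvesonExtreme (simplexPencil s) X)
    (H : Matrix (Fin 2) (Fin 2) ℝ) (hH : H.IsSymm) :
    ∃ W : Fin g → Matrix (Fin 2) (Fin 2) ℝ, (∀ j, (W j).IsSymm) ∧
      ∀ v : Fin (g + 1) × Fin 2 → ℂ,
        ((1 : Matrix (Fin (g + 1) × Fin 2) (Fin (g + 1) × Fin 2) ℂ)
            - ∑ j, simplexPencil s j ⊗ₖ X j).mulVec v = 0 →
          ((1 : Matrix (Fin (g + 1)) (Fin (g + 1)) ℂ) ⊗ₖ (H.map Complex.ofReal)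
            - ∑ j, simplexPencil s j ⊗ₖ ((W j).map Complex.ofReal)).mulVec v = 0 := by
  obtain ⟨b⟩ := nonempty_barycentricDual fun _ => eq_zero_of_boundedD hbdd
  have hXsymm : ∀ j, X j ∈ realSymmetric (Fin 2) := fun j =>
    mem_realSymmetric_of_im_eq_zero (hXeuc.1.1 j) (hXreal j)
  obtain ⟨α, hα⟩ := (Submodule.mem_span_range_iff_exists_fun ℝ).1 <|
    b.span_range_effect_eq_realSymmetric hXsymm hXeuc hXnotarv ▸
      mem_realSymmetric_iff.2 ⟨H, hH, rfl⟩
  have hblocks : ∀ p, α p • pencilBlock s 1 X p ∈ realSymmetric (Fin 2) := fun p =>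
    Submodule.smul_mem _ _ (pencilBlock_mem one_mem_realSymmetric hXsymm s p)
  obtain ⟨W', hW', hWblock⟩ := b.exists_pencilBlock_eq hblocks (K := H.map Complex.ofReal) <| by
    rw [← hα]
    exact Finset.sum_congr rfl fun p _ => smul_comm _ _ _
  choose W hWsymm hWmap using fun j => mem_realSymmetric_iff.1 (hW' j)
  refine ⟨W, hWsymm, fun v hv => ?_⟩
  rw [← one_kronecker_one] at hv
  simp only [hWmap]
  refine one_kronecker_sub_sum_kronecker_mulVec_eq_zero_iff.2 fun p => ?_
  rw [hWblock, smul_mulVec, one_kronecker_sub_sum_kronecker_mulVec_eq_zero_iff.1 hv p, smul_zero]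
end
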